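/- Let H ≤ G be an embedding of linearly reductive quantum groups and let V ∈ Ĝ be a simple O(G)-comodule whose restriction to the relative center Z(G,H) = Z(G) ∩ H is a sum of copies of the trivial character. Then there exists a simple O(G)-comodule V₁ ∈ Ĝ whose central character (restriction to Z(G)) is trivial and which is not disjoint from V over H, i.e. hom_H(V₁, V|_H) ≠ 0. -/

import Mathlib

/- Common infrastructure: right comodules over coalgebras, simplicity,
cosemisimplicity, subcoalgebras, adjoint coactions, normality, etc. -/

open TensorProduct

universe u

namespace QG

variable (k : Type u) [Field k]

section Coalg

variable (C : Type u) [AddCommGroup C] [Module k C] [Coalgebra k C]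

/-- `ρ : V →ₗ[k] V ⊗[k] C` is a (coassociative, counital) right coaction. -/
structure IsComod {V : Type u} [AddCommGroup V] [Module k V]
    (ρ : V →ₗ[k] V ⊗[k] C) : Prop where
  coassoc : ∀ v : V, ρ.rTensor C (ρ v) =
    (TensorProduct.assoc k V C C).symm.toLinearMap
      ((Coalgebra.comul (R := k) (A := C)).lTensor V (ρ v))
  counit : ∀ v : V, (TensorProduct.rid k V)
      ((Coalgebra.counit (R := k) (A := C)).lTensor V (ρ v)) = v

/-- A submodule `U ≤ V` is a subcomodule if the coaction restricts to it,
i.e. maps `U` into the image of `U ⊗ C` in `V ⊗ C`. -/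
def IsSubcomod {V : Type u} [AddCommGroup V] [Module k V]
    (ρ : V →ₗ[k] V ⊗[k] C) (U : Submodule k V) : Prop :=
  ∀ u ∈ U, ρ u ∈ LinearMap.range ((U.subtype).rTensor C)

/-- A simple subcomodule: a nonzero subcomodule with no nonzero proper
subcomodules below it. -/
def IsSimpleSubcomod {V : Type u} [AddCommGroup V] [Module k V]
    (ρ : V →ₗ[k] V ⊗[k] C) (U : Submodule k V) : Prop :=
  IsSubcomod k C ρ U ∧ U ≠ ⊥ ∧
    ∀ U' : Submodule k V, U' ≤ U → IsSubcomod k C ρ U' → U' = ⊥ ∨ U' = U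

/-- A comodule is simple if it is simple as a subcomodule of itself. -/
def IsSimpleComod {V : Type u} [AddCommGroup V] [Module k V]
    (ρ : V →ₗ[k] V ⊗[k] C) : Prop :=
  IsSimpleSubcomod k C ρ ⊤

/-- Morphisms of right `C`-comodules. -/
def IsComodHom {V W : Type u} [AddCommGroup V] [Module k V]
    [AddCommGroup W] [Module k W]
    (ρV : V →ₗ[k] V ⊗[k] C) (ρW : W →ₗ[k] W ⊗[k] C) (f : V →ₗ[k] W) : Prop :=
  ρW ∘ₗ f = (f.rTensor C) ∘ₗ ρV

/-- `C` is cosemisimple: every right `C`-comodule is an (internal) direct sum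
of simple subcomodules. -/
def IsCosemisimple : Prop :=
  ∀ (V : Type u) [AddCommGroup V] [Module k V]
    (ρ : V →ₗ[k] V ⊗[k] C), IsComod k C ρ →
    ∃ (ι : Type u) (U : ι → Submodule k V),
      (∀ i, IsSimpleSubcomod k C ρ (U i)) ∧
      iSupIndep U ∧ (⨆ i, U i) = ⊤

/-- Subcoalgebras of `C`, as submodules. -/
def IsSubcoalgebra (D : Submodule k C) : Prop :=
  ∀ x ∈ D, Coalgebra.comul (R := k) x ∈
    LinearMap.range (TensorProduct.map D.subtype D.subtype)

/-- Simple subcoalgebras: nonzero ones with no nonzero proper subcoalgebras. -/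
def IsSimpleSubcoalgebra (D : Submodule k C) : Prop :=
  IsSubcoalgebra k C D ∧ D ≠ ⊥ ∧
    ∀ D' : Submodule k C, D' ≤ D → IsSubcoalgebra k C D' → D' = ⊥ ∨ D' = D

/-- The coefficient space of a comodule: the smallest submodule `D ≤ C` such
that the coaction factors through `V ⊗ D`.  For a simple comodule this is its
coefficient coalgebra. -/
def coeffSpace {V : Type u} [AddCommGroup V] [Module k V]
    (ρ : V →ₗ[k] V ⊗[k] C) : Submodule k C :=
  sInf {D : Submodule k C | ∀ v : V, ρ v ∈ LinearMap.range ((D.subtype).lTensor V)}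

/-- Corestriction of a coaction along a linear map of coalgebras `π : C → D`. -/
noncomputable def cores {D : Type u} [AddCommGroup D] [Module k D]
    {V : Type u} [AddCommGroup V] [Module k V]
    (π : C →ₗ[k] D) (ρ : V →ₗ[k] V ⊗[k] C) : V →ₗ[k] V ⊗[k] D :=
  (π.lTensor V) ∘ₗ ρ

end Coalg

section Bialg

variable (H : Type u) [Ring H] [Bialgebra k H]

/-- An invariant vector for a coaction of a bialgebra. -/
def IsInvariant {V : Type u} [AddCommGroup V] [Module k V]
    (ρ : V →ₗ[k] V ⊗[k] H) (v : V) : Prop :=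
  ρ v = v ⊗ₜ[k] (1 : H)

/-- The tensor product coaction on `V ⊗ W` for a bialgebra `H`:
`v ⊗ w ↦ (v₀ ⊗ w₀) ⊗ v₁w₁`. -/
noncomputable def tensorCoact {V W : Type u}
    [AddCommGroup V] [Module k V] [AddCommGroup W] [Module k W]
    (ρV : V →ₗ[k] V ⊗[k] H) (ρW : W →ₗ[k] W ⊗[k] H) :
    (V ⊗[k] W) →ₗ[k] (V ⊗[k] W) ⊗[k] H :=
  ((LinearMap.mul' k H).lTensor (V ⊗[k] W)) ∘ₗ
    (TensorProduct.tensorTensorTensorComm k V H W H).toLinearMap ∘ₗ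
    (TensorProduct.map ρV ρW)

/-- `O(G/H)`: the right coinvariants `{x | (id ⊗ π)Δ(x) = x ⊗ 1}` of a
quotient map `π`. -/
noncomputable def quotientSpaceLeft {B : Type u} [AddCommGroup B] [Module k B] [One B]
    (π : H →ₗ[k] B) : Submodule k H :=
  LinearMap.ker ((π.lTensor H) ∘ₗ (Coalgebra.comul (R := k) (A := H)) -
    (TensorProduct.mk k H B).flip 1)

/-- `O(H\G)`: the left coinvariants `{x | (π ⊗ id)Δ(x) = 1 ⊗ x}`. -/
noncomputable def quotientSpaceRight {B : Type u} [AddCommGroup B] [Module k B] [One B]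
    (π : H →ₗ[k] B) : Submodule k H :=
  LinearMap.ker ((π.rTensor H) ∘ₗ (Coalgebra.comul (R := k) (A := H)) -
    (TensorProduct.mk k B H) 1)

end Bialg

section Hopf

variable (H : Type u) [Ring H] [HopfAlgebra k H]

/-- Iterated comultiplication `x ↦ x₁ ⊗ (x₂ ⊗ x₃)`. -/
noncomputable def comul2 : H →ₗ[k] H ⊗[k] (H ⊗[k] H) :=
  ((Coalgebra.comul (R := k) (A := H)).lTensor H) ∘ₗ (Coalgebra.comul (R := k) (A := H))

/-- The right adjoint coaction `x ↦ x₂ ⊗ S(x₁)x₃`. -/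
noncomputable def adR : H →ₗ[k] H ⊗[k] H :=
  ((LinearMap.mul' k H).lTensor H) ∘ₗ
    (TensorProduct.assoc k H H H).toLinearMap ∘ₗ
    (((TensorProduct.comm k H H).toLinearMap).rTensor H) ∘ₗ
    (TensorProduct.assoc k H H H).symm.toLinearMap ∘ₗ
    ((HopfAlgebra.antipode (R := k) (A := H)).rTensor (H ⊗[k] H)) ∘ₗ
    comul2 k H

/-- The left adjoint coaction `x ↦ x₁S(x₃) ⊗ x₂` (a left coaction, with the
coacting tensorand on the left). -/
noncomputable def adL : H →ₗ[k] H ⊗[k] H :=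
  ((LinearMap.mul' k H).rTensor H) ∘ₗ
    (TensorProduct.assoc k H H H).symm.toLinearMap ∘ₗ
    (((TensorProduct.comm k H H).toLinearMap).lTensor H) ∘ₗ
    (((HopfAlgebra.antipode (R := k) (A := H)).lTensor H).lTensor H) ∘ₗ
    comul2 k H

variable {B : Type u} [AddCommGroup B] [Module k B]

/-- `π : O(G) → O(H)` is right-normal: it is a morphism of right
`O(G)`-comodules for the right adjoint coaction, i.e. the right adjoint
coaction descends along `π`. -/
def IsRightNormal (π : H →ₗ[k] B) : Prop :=
  ∃ ρ : B →ₗ[k] B ⊗[k] H, ρ ∘ₗ π = (π.rTensor H) ∘ₗ adR k H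

/-- `π : O(G) → O(H)` is left-normal: the left adjoint coaction descends
along `π`. -/
def IsLeftNormal (π : H →ₗ[k] B) : Prop :=
  ∃ lam : B →ₗ[k] H ⊗[k] B, lam ∘ₗ π = (π.lTensor H) ∘ₗ adL k H

end Hopf

end QG

namespace QG

variable (k : Type u) [Field k]

section Coalg2

variable (C : Type u) [AddCommGroup C] [Module k C] [Coalgebra k C]

/-- A bundled simple right `C`-comodule. -/
structure SimpleComodule where
  V : Type u
  [addCommGroup : AddCommGroup V]
  [module : Module k V]
  ρ : V →ₗ[k] V ⊗[k] C
  isComod : IsComod k C ρ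
  isSimple : IsSimpleComod k C ρ

attribute [instance] SimpleComodule.addCommGroup SimpleComodule.module

/-- A simple comodule `(T, ρT)` is a constituent of a comodule `(V, ρV)`
(over a cosemisimple coalgebra) iff there is a nonzero comodule map `T → V`. -/
def IsConstituent {T V : Type u} [AddCommGroup T] [Module k T]
    [AddCommGroup V] [Module k V]
    (ρT : T →ₗ[k] T ⊗[k] C) (ρV : V →ₗ[k] V ⊗[k] C) : Prop :=
  ∃ f : T →ₗ[k] V, f ≠ 0 ∧ IsComodHom k C ρT ρV f

/-- Isomorphism of (simple) comodules. -/
def comodIsoRel (X Y : SimpleComodule k C) : Prop :=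
  ∃ e : X.V ≃ₗ[k] Y.V, IsComodHom k C X.ρ Y.ρ e.toLinearMap

/-- The set `Ĉ` of isomorphism classes of simple right `C`-comodules. -/
def SimpleComodQuot := Quot (comodIsoRel k C)

/-- The isomorphism class of a simple comodule. -/
def SimpleComodule.cls (X : SimpleComodule k C) : SimpleComodQuot k C :=
  Quot.mk _ X

/-- Group-like elements of a coalgebra; these correspond to the
one-dimensional comodules, i.e. to characters. -/
def IsGroupLike (a : C) : Prop :=
  Coalgebra.counit (R := k) (A := C) a = (1 : k) ∧
    Coalgebra.comul (R := k) (A := C) a = a ⊗ₜ[k] a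

/-- A linear map `φ : C → Z` out of a coalgebra is central if
`φ(x₁) ⊗ x₂ = φ(x₂) ⊗ x₁`. -/
def IsCentralMap {Z : Type u} [AddCommGroup Z] [Module k Z] (φ : C →ₗ[k] Z) : Prop :=
  (φ.rTensor C) ∘ₗ (Coalgebra.comul (R := k) (A := C)) =
    (φ.rTensor C) ∘ₗ (TensorProduct.comm k C C).toLinearMap ∘ₗ
      (Coalgebra.comul (R := k) (A := C))

/-- The simple comodule `X` has "central character" `g` with respect to the
quotient map `γ : C → Z`: corestricted along `γ`, the coaction on `X` is a sum
of copies of the character `g`. -/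
def HasCentralChar {Z : Type u} [AddCommGroup Z] [Module k Z]
    (γ : C →ₗ[k] Z) (X : SimpleComodule k C) (g : Z) : Prop :=
  ∀ v : X.V, cores k C γ X.ρ v = v ⊗ₜ[k] g

end Coalg2

/-- The k-span of the set of products `g * a`, `a ∈ Am`; for `Am` a submodule
this is the left ideal generated by `Am`. -/
def leftIdealGen {G : Type u} [Ring G] [Module k G] (Am : Submodule k G) :
    Submodule k G :=
  Submodule.span k {x : G | ∃ g : G, ∃ a ∈ Am, x = g * a}

end QG

namespace QG

variable (k : Type u) [Field k]
variable (G Hh : Type u) [Ring G] [HopfAlgebra k G] [Ring Hh] [HopfAlgebra k Hh]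

/-- The defining relators of the relative chain group `C(G,H)`: one relator
`g_U (g_V g_W)⁻¹` whenever `hom_H(U, V ⊗ W) ≠ 0`, i.e. whenever the
restrictions to `H` of `U` and `V ⊗ W` are not disjoint. -/
noncomputable def chainRels (π : G →ₐc[k] Hh) :
    Set (FreeGroup (SimpleComodQuot k G)) :=
  {r | ∃ U V W : SimpleComodule k G,
    (∃ f : U.V →ₗ[k] V.V ⊗[k] W.V, f ≠ 0 ∧
      IsComodHom k Hh (cores k G (π : G →ₗ[k] Hh) U.ρ)
        (cores k G (π : G →ₗ[k] Hh) (tensorCoact k G V.ρ W.ρ)) f) ∧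
    r = FreeGroup.of U.cls * (FreeGroup.of V.cls * FreeGroup.of W.cls)⁻¹}

/-- The relative chain group `C(G,H)`: generators `g_V`, `V ∈ Ĝ`, and
relations `g_U = g_V g_W` whenever `U` and `V ⊗ W` are not disjoint over `H`. -/
noncomputable def ChainGroup (π : G →ₐc[k] Hh) : Type (u + 1) :=
  PresentedGroup (chainRels k G Hh π)

noncomputable instance (π : G →ₐc[k] Hh) : Group (ChainGroup k G Hh π) :=
  inferInstanceAs (Group (PresentedGroup (chainRels k G Hh π)))

/-- The generator `g_V` of the chain group attached to `V ∈ Ĝ`. -/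
noncomputable def chainGen (π : G →ₐc[k] Hh) (x : SimpleComodQuot k G) :
    ChainGroup k G Hh π :=
  PresentedGroup.of x

end QG

/-! Let `Γ` be the group of grouplike elements of `O(Z(G))`. The parts `A g` of `O(G)` with central
character `g ∈ Γ` grade the Hopf algebra `O(G)`. Their images `D g` in `O(H)` are subcoalgebras,
and two of them are equal or disjoint according to whether their indices agree modulo the normal
subgroup `N = {g | 1 ∈ D g}`. Hence `x ↦ ε(x) g` on `D g` defines a Hopf algebra map
`O(H) → k[Γ/N]`, which agrees on `O(G)` with `O(Z(G)) → k[Γ/N]`, and the pair factors through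
`O(Z(G,H))`. So a central character `g` that is trivial on `Z(G,H)` lies in `N`, that is,
`D g = D 1`.

If `g` is the central character of `V`, a matrix coefficient of `V` therefore has the same image in
`O(H)` as some element of `A 1`. Cosemisimplicity of `O(H)` provides a quasi-inverse `O(H) → V` of
the coefficient map `V → O(H)`; it does not vanish on the image of `A 1`, hence is nonzero on a
simple subcomodule `V₁ ⊆ A 1`. -/

namespace QG

open WithConv

section Slices

variable {k V W C D : Type*} [Field k] [AddCommGroup V] [Module k V] [AddCommGroup W] [Module k W]
  [AddCommGroup C] [Module k C] [AddCommGroup D] [Module k D]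

/-- The right slice map `v ⊗ c ↦ φ(c) v`, linear in the functional `φ` as well. Slices reduce
statements about elements of `V ⊗ C`, where nothing can be evaluated, to statements in `V`. -/
noncomputable def sliceRight : (C →ₗ[k] k) →ₗ[k] V ⊗[k] C →ₗ[k] V :=
  (TensorProduct.rid k V).toLinearMap.compRight k ∘ₗ LinearMap.lTensorHom V

/-- The left slice map `v ⊗ c ↦ f(v) c`, which turns a coaction into its matrix coefficients. -/
noncomputable def sliceLeft (f : V →ₗ[k] k) : V ⊗[k] C →ₗ[k] C :=
  (TensorProduct.lid k C).toLinearMap ∘ₗ f.rTensor C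

@[simp]
lemma sliceRight_tmul (φ : C →ₗ[k] k) (v : V) (c : C) : sliceRight φ (v ⊗ₜ[k] c) = φ c • v := by
  simp [sliceRight]

@[simp]
lemma sliceLeft_tmul (f : V →ₗ[k] k) (v : V) (c : C) : sliceLeft f (v ⊗ₜ[k] c) = f v • c := by
  simp [sliceLeft]

lemma sliceRight_rTensor (φ : C →ₗ[k] k) (f : V →ₗ[k] W) (t : V ⊗[k] C) :
    sliceRight φ (f.rTensor C t) = f (sliceRight φ t) :=
  LinearMap.congr_fun (f := sliceRight φ ∘ₗ f.rTensor C) (g := f ∘ₗ sliceRight φ)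
    (TensorProduct.ext' fun v c => by simp) t

lemma sliceRight_lTensor (φ : D →ₗ[k] k) (f : C →ₗ[k] D) (t : V ⊗[k] C) :
    sliceRight φ (f.lTensor V t) = sliceRight (φ ∘ₗ f) t :=
  LinearMap.congr_fun (f := sliceRight φ ∘ₗ f.lTensor V) (g := sliceRight (φ ∘ₗ f))
    (TensorProduct.ext' fun v c => by simp) t

lemma sliceLeft_rTensor (f : W →ₗ[k] k) (g : V →ₗ[k] W) (t : V ⊗[k] C) :
    sliceLeft f (g.rTensor C t) = sliceLeft (f ∘ₗ g) t := by
  simp [sliceLeft, LinearMap.rTensor_comp]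

lemma sliceLeft_lTensor (f : V →ₗ[k] k) (g : C →ₗ[k] D) (t : V ⊗[k] C) :
    sliceLeft f (g.lTensor V t) = g (sliceLeft f t) :=
  LinearMap.congr_fun (f := sliceLeft f ∘ₗ g.lTensor V) (g := g ∘ₗ sliceLeft f)
    (TensorProduct.ext' fun v c => by simp) t

lemma sliceLeft_comm (f : C →ₗ[k] k) (t : V ⊗[k] C) :
    sliceLeft f (TensorProduct.comm k V C t) = sliceRight f t :=
  LinearMap.congr_fun (f := sliceLeft f ∘ₗ (TensorProduct.comm k V C).toLinearMap)
    (g := sliceRight f) (TensorProduct.ext' fun v c => by simp) t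

lemma apply_sliceLeft (f : V →ₗ[k] k) (φ : C →ₗ[k] k) (t : V ⊗[k] C) :
    φ (sliceLeft f t) = f (sliceRight φ t) :=
  LinearMap.congr_fun (f := φ ∘ₗ sliceLeft f) (g := f ∘ₗ sliceRight φ)
    (TensorProduct.ext' fun v c => by simp [mul_comm]) t

lemma apply_sliceRight (f : V →ₗ[k] k) (φ : C →ₗ[k] k) (t : V ⊗[k] C) :
    f (sliceRight φ t) = LinearMap.mul' k k (TensorProduct.map f φ t) :=
  LinearMap.congr_fun (f := f ∘ₗ sliceRight φ) (g := LinearMap.mul' k k ∘ₗ TensorProduct.map f φ)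
    (TensorProduct.ext' fun v c => by simp [mul_comm]) t

lemma sliceRight_sliceRight_assoc_symm (φ : C →ₗ[k] k) (ψ : D →ₗ[k] k) (t : V ⊗[k] (C ⊗[k] D)) :
    sliceRight φ (sliceRight ψ ((TensorProduct.assoc k V C D).symm t)) =
      sliceRight (LinearMap.mul' k k ∘ₗ TensorProduct.map φ ψ) t :=
  LinearMap.congr_fun
    (f := sliceRight φ ∘ₗ sliceRight ψ ∘ₗ (TensorProduct.assoc k V C D).symm.toLinearMap)
    (g := sliceRight (LinearMap.mul' k k ∘ₗ TensorProduct.map φ ψ))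
    (by ext v c d; simp [smul_smul, mul_comm]) t

lemma eq_zero_of_forall_sliceRight {t : V ⊗[k] C} (h : ∀ φ : C →ₗ[k] k, sliceRight φ t = 0) :
    t = 0 := by
  let b := Module.Free.chooseBasis k C
  have coord (i) (t : V ⊗[k] C) : (equivFinsuppOfBasisRight b) t i = sliceRight (b.coord i) t :=
    LinearMap.congr_fun
      (f := Finsupp.lapply i ∘ₗ (equivFinsuppOfBasisRight (M := V) b).toLinearMap)
      (TensorProduct.ext' fun v c => by simp) t
  refine (equivFinsuppOfBasisRight (M := V) b).map_eq_zero_iff.1 (Finsupp.ext fun i => ?_)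
  rw [coord, h, Finsupp.zero_apply]

lemma ext_sliceRight {s t : V ⊗[k] C} (h : ∀ φ : C →ₗ[k] k, sliceRight φ s = sliceRight φ t) :
    s = t :=
  sub_eq_zero.1 <| eq_zero_of_forall_sliceRight fun φ => by rw [map_sub, h, sub_self]

lemma mem_range_rTensor_subtype_iff {U : Submodule k V} {t : V ⊗[k] C} :
    t ∈ LinearMap.range (U.subtype.rTensor C) ↔ ∀ φ : C →ₗ[k] k, sliceRight φ t ∈ U := by
  constructor
  · rintro ⟨s, rfl⟩ φ
    rw [sliceRight_rTensor]
    exact (sliceRight φ s).2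
  · intro h
    have hexact := rTensor_exact C (LinearMap.exact_subtype_mkQ U) U.mkQ_surjective
    refine (hexact t).1 (eq_zero_of_forall_sliceRight fun φ => ?_)
    rw [sliceRight_rTensor]
    exact (Submodule.Quotient.mk_eq_zero U).2 (h φ)

lemma mem_range_lTensor_subtype_iff {U : Submodule k C} {t : V ⊗[k] C} :
    t ∈ LinearMap.range (U.subtype.lTensor V) ↔ ∀ f : V →ₗ[k] k, sliceLeft f t ∈ U := by
  constructor
  · rintro ⟨s, rfl⟩ f
    rw [sliceLeft_lTensor]
    exact (sliceLeft f s).2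
  · intro h
    have hexact := lTensor_exact V (LinearMap.exact_subtype_mkQ U) U.mkQ_surjective
    refine (hexact t).1 (eq_zero_of_forall_sliceRight fun φ => ?_)
    refine (Module.forall_dual_apply_eq_zero_iff k _).1 fun f => ?_
    rw [← apply_sliceLeft, sliceLeft_lTensor, (U.mkQ_apply _).trans
      ((Submodule.Quotient.mk_eq_zero U).2 (h f)), map_zero]

lemma mem_range_map_subtype_iff {U : Submodule k V} {D : Submodule k C} {t : V ⊗[k] C} :
    t ∈ LinearMap.range (TensorProduct.map U.subtype D.subtype) ↔
      (∀ φ : C →ₗ[k] k, sliceRight φ t ∈ U) ∧ ∀ f : V →ₗ[k] k, sliceLeft f t ∈ D := by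
  rw [← LinearMap.rTensor_comp_lTensor]
  constructor
  · rintro ⟨s, rfl⟩
    refine ⟨mem_range_rTensor_subtype_iff.1 ⟨_, rfl⟩, fun f => ?_⟩
    rw [LinearMap.comp_apply, sliceLeft_rTensor, sliceLeft_lTensor]
    exact (sliceLeft _ s).2
  · rintro ⟨hU, hD⟩
    obtain ⟨s, rfl⟩ := mem_range_rTensor_subtype_iff.2 hU
    obtain ⟨r, rfl⟩ : s ∈ LinearMap.range (D.subtype.lTensor U) := by
      refine mem_range_lTensor_subtype_iff.2 fun f => ?_
      obtain ⟨f', rfl⟩ := f.exists_extend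
      exact sliceLeft_rTensor f' U.subtype s ▸ hD f'
    exact ⟨r, rfl⟩

end Slices

section DualAction

variable {k : Type u} [Field k] {C : Type u} [AddCommGroup C] [Module k C]
  {V W : Type u} [AddCommGroup V] [Module k V] [AddCommGroup W] [Module k W]

/-- The operator `v ↦ v₀ φ(v₁)` by which a functional `φ` on `C` acts on a `C`-comodule. -/
noncomputable def dualAct (ρ : V →ₗ[k] V ⊗[k] C) : (C →ₗ[k] k) →ₗ[k] Module.End k V :=
  LinearMap.lcomp k V ρ ∘ₗ sliceRight

lemma dualAct_apply (ρ : V →ₗ[k] V ⊗[k] C) (φ : C →ₗ[k] k) (v : V) :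
    dualAct ρ φ v = sliceRight φ (ρ v) := rfl

lemma isSubcomod_iff {ρ : V →ₗ[k] V ⊗[k] C} {U : Submodule k V} :
    IsSubcomod k C ρ U ↔ ∀ (φ : C →ₗ[k] k), ∀ u ∈ U, dualAct ρ φ u ∈ U := by
  simp only [IsSubcomod, mem_range_rTensor_subtype_iff, dualAct_apply]
  exact ⟨fun h φ u hu => h u hu φ, fun h u hu φ => h φ u hu⟩

lemma isComodHom_iff {ρV : V →ₗ[k] V ⊗[k] C} {ρW : W →ₗ[k] W ⊗[k] C}
    {f : V →ₗ[k] W} :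
    IsComodHom k C ρV ρW f ↔ ∀ φ v, dualAct ρW φ (f v) = f (dualAct ρV φ v) := by
  simp only [dualAct_apply, ← sliceRight_rTensor]
  exact ⟨fun h φ v => congrArg _ (LinearMap.congr_fun h v),
    fun h => LinearMap.ext fun v => ext_sliceRight fun φ => h φ v⟩

lemma dualAct_cores {D : Type u} [AddCommGroup D] [Module k D] (γ : C →ₗ[k] D)
    (ρ : V →ₗ[k] V ⊗[k] C) (φ : D →ₗ[k] k) :
    dualAct (cores k C γ ρ) φ = dualAct ρ (φ ∘ₗ γ) :=
  LinearMap.ext fun v => sliceRight_lTensor φ γ (ρ v)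

lemma IsComodHom.cores {D : Type u} [AddCommGroup D] [Module k D] (γ : C →ₗ[k] D)
    {ρV : V →ₗ[k] V ⊗[k] C} {ρW : W →ₗ[k] W ⊗[k] C} {f : V →ₗ[k] W}
    (hf : IsComodHom k C ρV ρW f) : IsComodHom k D (cores k C γ ρV) (cores k C γ ρW) f :=
  isComodHom_iff.2 fun φ v => by rw [dualAct_cores, dualAct_cores, isComodHom_iff.1 hf]

lemma IsComodHom.comp {U : Type u} [AddCommGroup U] [Module k U] {ρU : U →ₗ[k] U ⊗[k] C}
    {ρV : V →ₗ[k] V ⊗[k] C} {ρW : W →ₗ[k] W ⊗[k] C} {f : V →ₗ[k] W} {g : U →ₗ[k] V}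
    (hf : IsComodHom k C ρV ρW f) (hg : IsComodHom k C ρU ρV g) :
    IsComodHom k C ρU ρW (f ∘ₗ g) :=
  isComodHom_iff.2 fun φ u => by
    rw [LinearMap.comp_apply, isComodHom_iff.1 hf, isComodHom_iff.1 hg, LinearMap.comp_apply]

lemma IsSubcomod.exists_restrict {ρ : V →ₗ[k] V ⊗[k] C} {U : Submodule k V}
    (hU : IsSubcomod k C ρ U) : ∃ ρU : U →ₗ[k] U ⊗[k] C, IsComodHom k C ρU ρ U.subtype := by
  let e := LinearEquiv.ofInjective (U.subtype.rTensor C)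
    (Module.Flat.rTensor_preserves_injective_linearMap _ U.subtype_injective)
  refine ⟨e.symm.toLinearMap ∘ₗ (ρ ∘ₗ U.subtype).codRestrict _ fun u => hU u u.2, ?_⟩
  refine LinearMap.ext fun u => ?_
  exact (congrArg Subtype.val (e.apply_symm_apply ⟨ρ u, hU u u.2⟩)).symm

lemma IsSimpleSubcomod.isSimpleComod {ρ : V →ₗ[k] V ⊗[k] C} {U : Submodule k V}
    (hU : IsSimpleSubcomod k C ρ U) {ρU : U →ₗ[k] U ⊗[k] C}
    (hρU : IsComodHom k C ρU ρ U.subtype) : IsSimpleComod k C ρU := by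
  rw [isComodHom_iff] at hρU
  refine ⟨isSubcomod_iff.2 fun _ _ _ => trivial, ?_, fun U' _ hU' => ?_⟩
  · exact fun h => hU.2.1 (by rw [← U.map_subtype_top, h, Submodule.map_bot])
  have hmap : IsSubcomod k C ρ (U'.map U.subtype) := by
    rw [isSubcomod_iff] at hU' ⊢
    rintro φ _ ⟨u, hu, rfl⟩
    exact ⟨_, hU' φ u hu, (hρU φ u).symm⟩
  refine (hU.2.2 _ (U.map_subtype_le U') hmap).imp (fun h => ?_) fun h => ?_
  · exact Submodule.map_injective_of_injective U.subtype_injective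
      (h.trans (Submodule.map_bot _).symm)
  · exact Submodule.map_injective_of_injective U.subtype_injective (h.trans U.map_subtype_top.symm)

variable [Coalgebra k C]

lemma isComod_iff {ρ : V →ₗ[k] V ⊗[k] C} :
    IsComod k C ρ ↔ dualAct ρ Coalgebra.counit = 1 ∧ ∀ φ ψ : C →ₗ[k] k,
      dualAct ρ (toConv φ * toConv ψ).ofConv = dualAct ρ φ * dualAct ρ ψ := by
  have left (φ ψ : C →ₗ[k] k) (v : V) : (dualAct ρ φ * dualAct ρ ψ) v =
      sliceRight φ (sliceRight ψ (ρ.rTensor C (ρ v))) := by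
    rw [sliceRight_rTensor]; rfl
  have right (φ ψ : C →ₗ[k] k) (v : V) : dualAct ρ (toConv φ * toConv ψ).ofConv v =
      sliceRight φ (sliceRight ψ ((TensorProduct.assoc k V C C).symm
        ((Coalgebra.comul (R := k) (A := C)).lTensor V (ρ v)))) := by
    rw [sliceRight_sliceRight_assoc_symm, sliceRight_lTensor]; rfl
  constructor
  · intro h
    exact ⟨LinearMap.ext h.counit, fun φ ψ => LinearMap.ext fun v => by
      rw [left, right, h.coassoc]; rfl⟩
  · rintro ⟨hone, hmul⟩
    refine ⟨fun v => ext_sliceRight fun ψ => ext_sliceRight fun φ => ?_, LinearMap.congr_fun hone⟩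
    rw [← left, ← hmul, right]; rfl

lemma IsComod.dualAct_mul {ρ : V →ₗ[k] V ⊗[k] C} (h : IsComod k C ρ) (φ ψ : C →ₗ[k] k) (v : V) :
    dualAct ρ (toConv φ * toConv ψ).ofConv v = dualAct ρ φ (dualAct ρ ψ v) :=
  LinearMap.congr_fun ((isComod_iff.1 h).2 φ ψ) v

lemma IsComod.dualAct_counit {ρ : V →ₗ[k] V ⊗[k] C} (h : IsComod k C ρ) (v : V) :
    dualAct ρ Coalgebra.counit v = v :=
  h.counit v

lemma isComod_comul : IsComod k C (Coalgebra.comul (R := k) (A := C)) where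
  coassoc x := (Coalgebra.coassoc_symm_apply x).symm
  counit x := by simp

lemma IsComod.cores {D : Type u} [AddCommGroup D] [Module k D] [Coalgebra k D] (γ : C →ₗc[k] D)
    {ρ : V →ₗ[k] V ⊗[k] C} (h : IsComod k C ρ) : IsComod k D (cores k C γ.toLinearMap ρ) := by
  refine isComod_iff.2 ⟨LinearMap.ext fun v => ?_, fun φ ψ => LinearMap.ext fun v => ?_⟩
  · rw [dualAct_cores, γ.counit_comp, h.dualAct_counit]; rfl
  · have hγ := LinearMap.convMul_comp_coalgHom_distrib (toConv φ) (toConv ψ) γ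
    rw [dualAct_cores, hγ, Module.End.mul_apply, dualAct_cores, dualAct_cores, h.dualAct_mul]

lemma isComodHom_coalgHom {D : Type u} [AddCommGroup D] [Module k D] [Coalgebra k D]
    (γ : C →ₗc[k] D) :
    IsComodHom k D (cores k C γ.toLinearMap Coalgebra.comul) Coalgebra.comul γ.toLinearMap := by
  rw [IsComodHom, ← γ.map_comp_comul, cores, ← LinearMap.comp_assoc,
    LinearMap.rTensor_comp_lTensor]

lemma IsComod.of_injective {ρV : V →ₗ[k] V ⊗[k] C} {ρW : W →ₗ[k] W ⊗[k] C} {f : V →ₗ[k] W}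
    (hf : IsComodHom k C ρV ρW f) (hinj : Function.Injective f) (hW : IsComod k C ρW) :
    IsComod k C ρV := by
  rw [isComodHom_iff] at hf
  refine isComod_iff.2 ⟨LinearMap.ext fun v => hinj ?_,
    fun φ ψ => LinearMap.ext fun v => hinj ?_⟩
  · rw [← hf, hW.dualAct_counit]; rfl
  · rw [← hf, hW.dualAct_mul, Module.End.mul_apply, hf, hf]

theorem IsCosemisimple.exists_simpleComodule_comp_ne_zero (hC : IsCosemisimple k C)
    {ρ : V →ₗ[k] V ⊗[k] C} (hρ : IsComod k C ρ) {M : Type*} [AddCommGroup M] [Module k M]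
    {T : V →ₗ[k] M} (hT : T ≠ 0) :
    ∃ (X : SimpleComodule k C) (j : X.V →ₗ[k] V),
      Function.Injective j ∧ IsComodHom k C X.ρ ρ j ∧ T ∘ₗ j ≠ 0 := by
  obtain ⟨ι, U, hU, -, htop⟩ := hC V ρ hρ
  obtain ⟨i, hi⟩ : ∃ i, ¬ U i ≤ LinearMap.ker T := by
    by_contra! h
    exact hT (LinearMap.ker_eq_top.1 (top_le_iff.1 (htop ▸ iSup_le h)))
  obtain ⟨ρU, hρU⟩ := (hU i).1.exists_restrict
  refine ⟨⟨U i, ρU, .of_injective hρU (U i).subtype_injective hρ, (hU i).isSimpleComod hρU⟩,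
    (U i).subtype, (U i).subtype_injective, hρU, fun h => hi fun u hu => ?_⟩
  exact LinearMap.congr_fun h (⟨u, hu⟩ : U i)

end DualAction

section DualModule

variable {k : Type u} [Field k] {C : Type u} [AddCommGroup C] [Module k C] [Coalgebra k C]
  {V W : Type u} [AddCommGroup V] [Module k V] [AddCommGroup W] [Module k W]
  {ρ : V →ₗ[k] V ⊗[k] C} {ρW : W →ₗ[k] W ⊗[k] C}

/-- The space `V` of a comodule, regarded as a left module over the convolution algebra of
functionals on `C`. Subcomodules and comodule maps become submodules and linear maps, which makes
the library on semisimple modules available. -/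
def IsComod.DualModule (_ : IsComod k C ρ) : Type u := V

namespace IsComod

instance (h : IsComod k C ρ) : AddCommGroup h.DualModule := inferInstanceAs (AddCommGroup V)

instance (h : IsComod k C ρ) : Module k h.DualModule := inferInstanceAs (Module k V)

noncomputable instance (h : IsComod k C ρ) : Module (WithConv (C →ₗ[k] k)) h.DualModule where
  smul φ v := dualAct ρ φ.ofConv v
  one_smul := h.dualAct_counit
  mul_smul φ ψ := h.dualAct_mul φ.ofConv ψ.ofConv
  smul_zero φ := map_zero (dualAct ρ φ.ofConv)
  smul_add φ := map_add (dualAct ρ φ.ofConv)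
  add_smul φ ψ v := by
    change dualAct ρ (φ.ofConv + ψ.ofConv) v = _
    rw [map_add]
    rfl
  zero_smul v := by
    change dualAct ρ 0 v = 0
    rw [map_zero]
    rfl

instance (h : IsComod k C ρ) : IsScalarTower k (WithConv (C →ₗ[k] k)) h.DualModule where
  smul_assoc a φ v := by
    change dualAct ρ (a • φ.ofConv) v = _
    rw [map_smul]
    rfl

/-- A subcomodule as a submodule of the associated module. -/
def toDualSubmodule (h : IsComod k C ρ) {U : Submodule k V} (hU : IsSubcomod k C ρ U) :
    Submodule (WithConv (C →ₗ[k] k)) h.DualModule where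
  carrier := (U : Set V)
  zero_mem' := U.zero_mem
  add_mem' := U.add_mem
  smul_mem' φ v hv := isSubcomod_iff.1 hU φ.ofConv v hv

lemma restrictScalars_toDualSubmodule (h : IsComod k C ρ) {U : Submodule k V}
    (hU : IsSubcomod k C ρ U) : (h.toDualSubmodule hU).restrictScalars k = U := rfl

lemma isSubcomod_restrictScalars (h : IsComod k C ρ)
    (U : Submodule (WithConv (C →ₗ[k] k)) h.DualModule) :
    IsSubcomod k C ρ (U.restrictScalars k) :=
  isSubcomod_iff.2 fun φ _ hu => U.smul_mem (toConv φ) hu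

lemma isSimpleModule_toDualSubmodule (h : IsComod k C ρ) {U : Submodule k V}
    (hU : IsSimpleSubcomod k C ρ U) :
    IsSimpleModule (WithConv (C →ₗ[k] k)) (h.toDualSubmodule hU.1) := by
  rw [isSimpleModule_iff_isAtom]
  refine ⟨fun hbot => hU.2.1 ?_, fun P hP => ?_⟩
  · rw [← h.restrictScalars_toDualSubmodule hU.1, hbot, Submodule.restrictScalars_bot]
    rfl
  · refine (hU.2.2 _ hP.le (h.isSubcomod_restrictScalars P)).elim
      (fun hbot => Submodule.restrictScalars_injective k _ _ hbot)
      fun heq => (hP.ne (Submodule.restrictScalars_injective k _ _ heq)).elim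

lemma isSemisimpleModule (h : IsComod k C ρ) (hC : IsCosemisimple k C) :
    IsSemisimpleModule (WithConv (C →ₗ[k] k)) h.DualModule := by
  obtain ⟨ι, U, hU, -, htop⟩ := hC V ρ h
  refine isSemisimpleModule_of_isSemisimpleModule_submodule'
    (p := fun i => h.toDualSubmodule (hU i).1)
    (fun i => have := h.isSimpleModule_toDualSubmodule (hU i); inferInstance) ?_
  have hle : ⨆ i, U i ≤ (⨆ i, h.toDualSubmodule (hU i).1).restrictScalars k :=
    iSup_le fun i => le_iSup (fun i => h.toDualSubmodule (hU i).1) i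
  exact Submodule.restrictScalars_injective k _ _ (top_le_iff.1 (htop ▸ hle))

/-- A comodule map as a linear map of the associated modules. -/
def toDualHom (h : IsComod k C ρ) (hW : IsComod k C ρW) {f : V →ₗ[k] W}
    (hf : IsComodHom k C ρ ρW f) : h.DualModule →ₗ[WithConv (C →ₗ[k] k)] hW.DualModule where
  toFun := f
  map_add' := f.map_add
  map_smul' φ v := (isComodHom_iff.1 hf φ.ofConv v).symm

lemma isComodHom_restrictScalars (h : IsComod k C ρ) (hW : IsComod k C ρW)
    (f : h.DualModule →ₗ[WithConv (C →ₗ[k] k)] hW.DualModule) :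
    IsComodHom k C ρ ρW (f.restrictScalars k) :=
  isComodHom_iff.2 fun φ v => (f.map_smul (toConv φ) v).symm

end IsComod

lemma exists_comp_comp_self_of_isSemisimpleModule {R M N : Type*} [Ring R] [AddCommGroup M]
    [AddCommGroup N] [Module R M] [Module R N] [IsSemisimpleModule R M] [IsSemisimpleModule R N]
    (f : M →ₗ[R] N) : ∃ g : N →ₗ[R] M, f ∘ₗ g ∘ₗ f = f := by
  obtain ⟨s, hs⟩ := IsSemisimpleModule.lifting_property f.rangeRestrict f.surjective_rangeRestrict
    LinearMap.id
  obtain ⟨g, hg⟩ := IsSemisimpleModule.extension_property (LinearMap.range f).subtype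
    (LinearMap.range f).subtype_injective s
  refine ⟨g, LinearMap.ext fun x => ?_⟩
  exact congrArg Subtype.val <| (congrArg f.rangeRestrict
    (LinearMap.congr_fun hg (f.rangeRestrict x))).trans (LinearMap.congr_fun hs _)

theorem IsCosemisimple.exists_comp_comp_self (hC : IsCosemisimple k C) (hV : IsComod k C ρ)
    (hW : IsComod k C ρW) {f : V →ₗ[k] W} (hf : IsComodHom k C ρ ρW f) :
    ∃ g : W →ₗ[k] V, IsComodHom k C ρW ρ g ∧ f ∘ₗ g ∘ₗ f = f := by
  have := hV.isSemisimpleModule hC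
  have := hW.isSemisimpleModule hC
  obtain ⟨g, hg⟩ := exists_comp_comp_self_of_isSemisimpleModule (hV.toDualHom hW hf)
  exact ⟨g.restrictScalars k, hW.isComodHom_restrictScalars hV g,
    LinearMap.ext fun v => LinearMap.congr_fun hg v⟩

end DualModule

section Simple

variable {k : Type u} [Field k] {C : Type u} [AddCommGroup C] [Module k C]

lemma exists_finite_forall_sliceRight_mem {V : Type u} [AddCommGroup V] [Module k V]
    (t : V ⊗[k] C) :
    ∃ P : Submodule k V, Module.Finite k P ∧ ∀ φ : C →ₗ[k] k, sliceRight φ t ∈ P := by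
  obtain ⟨P, hP, ht⟩ := TensorProduct.exists_finite_submodule_left_of_setFinite {t}
    (Set.finite_singleton t)
  exact ⟨P, hP, mem_range_rTensor_subtype_iff.1 (ht rfl)⟩

variable [Coalgebra k C]

namespace SimpleComodule

instance (X : SimpleComodule k C) : Nontrivial X.V := by
  rw [← Submodule.nontrivial_iff k]
  exact ⟨⊤, ⊥, X.isSimple.2.1⟩

lemma eq_top_of_isSubcomod {X : SimpleComodule k C} {U : Submodule k X.V}
    (hU : IsSubcomod k C X.ρ U) {v : X.V} (hv : v ∈ U) (hv0 : v ≠ 0) : U = ⊤ :=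
  (X.isSimple.2.2 U le_top hU).resolve_left (Submodule.ne_bot_iff U |>.2 ⟨v, hv, hv0⟩)

instance (X : SimpleComodule k C) : Module.Finite k X.V := by
  obtain ⟨v, hv⟩ := exists_ne (0 : X.V)
  let orbit := LinearMap.range ((dualAct X.ρ).flip v)
  have hsub : IsSubcomod k C X.ρ orbit := isSubcomod_iff.2 <| by
    rintro φ _ ⟨ψ, rfl⟩
    exact ⟨_, X.isComod.dualAct_mul φ ψ v⟩
  have htop : orbit = ⊤ := eq_top_of_isSubcomod hsub ⟨_, X.isComod.dualAct_counit v⟩ hv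
  obtain ⟨P, hP, hmem⟩ := exists_finite_forall_sliceRight_mem (X.ρ v)
  have : P = ⊤ := top_le_iff.1 <| htop ▸ fun _ ⟨φ, h⟩ => h ▸ hmem φ
  exact Module.finite_def.2 (this ▸ Module.Finite.iff_fg.1 hP)

theorem exists_eq_smul_of_isComodHom [IsAlgClosed k] (X : SimpleComodule k C) {T : Module.End k X.V}
    (hT : IsComodHom k C X.ρ X.ρ T) : ∃ c : k, ∀ v, T v = c • v := by
  obtain ⟨c, hc⟩ := Module.End.exists_eigenvalue T
  obtain ⟨w, hw, hw0⟩ := hc.exists_hasEigenvector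
  have hsub : IsSubcomod k C X.ρ (T.eigenspace c) := isSubcomod_iff.2 fun φ v hv => by
    rw [Module.End.mem_eigenspace_iff] at hv ⊢
    rw [← isComodHom_iff.1 hT, hv, map_smul]
  exact ⟨c, fun v => Module.End.mem_eigenspace_iff.1 <|
    eq_top_of_isSubcomod hsub hw hw0 ▸ Submodule.mem_top⟩

end SimpleComodule

end Simple

section CentralPart

variable {k : Type u} [Field k] {C : Type u} [AddCommGroup C] [Module k C]
  {V W : Type u} [AddCommGroup V] [Module k V] [AddCommGroup W] [Module k W]
  {Z : Type u} [AddCommGroup Z] [Module k Z] {γ : C →ₗ[k] Z}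
  {ρ : V →ₗ[k] V ⊗[k] C} {ρW : W →ₗ[k] W ⊗[k] C} {g : Z}

/-- The largest subspace of a `C`-comodule on which the coaction corestricted along `γ` is a sum of
copies of the character `g`. It is a subcomodule when `γ` is central. -/
noncomputable def centralPart (γ : C →ₗ[k] Z) (ρ : V →ₗ[k] V ⊗[k] C) (g : Z) : Submodule k V :=
  LinearMap.eqLocus (cores k C γ ρ) ((TensorProduct.mk k V Z).flip g)

lemma mem_centralPart {v : V} : v ∈ centralPart γ ρ g ↔ cores k C γ ρ v = v ⊗ₜ[k] g := Iff.rfl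

lemma mem_centralPart_iff_dualAct {v : V} :
    v ∈ centralPart γ ρ g ↔ ∀ ω : Z →ₗ[k] k, dualAct ρ (ω ∘ₗ γ) v = ω g • v := by
  simp only [← dualAct_cores, ← sliceRight_tmul, dualAct_apply, mem_centralPart]
  exact ⟨fun h ω => congrArg _ h, ext_sliceRight⟩

lemma IsComodHom.mem_centralPart {f : V →ₗ[k] W} (hf : IsComodHom k C ρ ρW f) {v : V}
    (hv : v ∈ centralPart γ ρ g) : f v ∈ centralPart γ ρW g := by
  rw [mem_centralPart_iff_dualAct] at hv ⊢
  exact fun ω => by rw [isComodHom_iff.1 hf, hv, map_smul]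

lemma IsComodHom.mem_centralPart_of_injective {f : V →ₗ[k] W} (hf : IsComodHom k C ρ ρW f)
    (hinj : Function.Injective f) {v : V} (hv : f v ∈ centralPart γ ρW g) :
    v ∈ centralPart γ ρ g := by
  rw [mem_centralPart_iff_dualAct] at hv ⊢
  exact fun ω => hinj (by rw [← isComodHom_iff.1 hf, hv, map_smul])

variable [Coalgebra k C]

lemma IsCentralMap.convMul_comm (hγ : IsCentralMap k C γ) (ω : Z →ₗ[k] k) (φ : C →ₗ[k] k) :
    toConv (ω ∘ₗ γ) * toConv φ = toConv φ * toConv (ω ∘ₗ γ) := by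
  ext x
  have hx : sliceLeft (ω ∘ₗ γ) (Coalgebra.comul x) = sliceRight (ω ∘ₗ γ) (Coalgebra.comul x) := by
    rw [← sliceLeft_rTensor, ← sliceLeft_comm, ← sliceLeft_rTensor]
    exact congrArg (sliceLeft ω) (LinearMap.congr_fun hγ x)
  rw [LinearMap.convMul_apply, LinearMap.convMul_apply, ← apply_sliceRight, ← apply_sliceRight,
    ← hx, apply_sliceLeft]

lemma IsCentralMap.isComodHom_dualAct (hγ : IsCentralMap k C γ) (hρ : IsComod k C ρ)
    (ω : Z →ₗ[k] k) : IsComodHom k C ρ ρ (dualAct ρ (ω ∘ₗ γ)) :=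
  isComodHom_iff.2 fun φ v => by rw [← hρ.dualAct_mul, ← hρ.dualAct_mul, hγ.convMul_comm]

lemma IsCentralMap.isSubcomod_centralPart (hγ : IsCentralMap k C γ) (hρ : IsComod k C ρ) :
    IsSubcomod k C ρ (centralPart γ ρ g) := by
  refine isSubcomod_iff.2 fun φ v hv => ?_
  rw [mem_centralPart_iff_dualAct] at hv ⊢
  intro ω
  rw [← isComodHom_iff.1 (hγ.isComodHom_dualAct hρ ω), hv, map_smul]

theorem IsCentralMap.exists_hasCentralChar [IsAlgClosed k] (hγ : IsCentralMap k C γ)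
    (X : SimpleComodule k C) : ∃ g, HasCentralChar k C γ X g := by
  obtain ⟨v, hv⟩ := exists_ne (0 : X.V)
  obtain ⟨f, hf⟩ := Module.Projective.exists_dual_eq_one k hv
  refine ⟨sliceLeft f (cores k C γ X.ρ v), fun w => mem_centralPart_iff_dualAct.2 fun ω => ?_⟩
  obtain ⟨c, hc⟩ := X.exists_eq_smul_of_isComodHom (hγ.isComodHom_dualAct X.isComod ω)
  rw [apply_sliceLeft, ← dualAct_apply, dualAct_cores, hc, hc, map_smul, hf, smul_eq_mul, mul_one]

lemma IsComod.isGroupLikeElem (hρ : IsComod k C ρ) {v : V} (hv : v ≠ 0) {c : C}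
    (hc : ρ v = v ⊗ₜ[k] c) : IsGroupLikeElem k c := by
  obtain ⟨f, hf⟩ := Module.Projective.exists_dual_eq_one k hv
  have hcounit : Coalgebra.counit (R := k) c • v = v := by simpa [hc] using hρ.counit v
  have hcomul : (v ⊗ₜ[k] c) ⊗ₜ[k] c =
      (TensorProduct.assoc k V C C).symm (v ⊗ₜ[k] Coalgebra.comul (R := k) c) := by
    simpa [hc] using hρ.coassoc v
  refine ⟨by simpa [hf] using congrArg f hcounit, ?_⟩
  simpa [hf] using (congrArg (sliceLeft f ∘ₗ (TensorProduct.assoc k V C C).toLinearMap) hcomul).symm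

end CentralPart

section Coefficients

variable {k : Type u} [Field k] {C : Type u} [AddCommGroup C] [Module k C] [Coalgebra k C]
  {V : Type u} [AddCommGroup V] [Module k V]

lemma IsComod.isComodHom_sliceLeft {ρ : V →ₗ[k] V ⊗[k] C} (hρ : IsComod k C ρ) (f : V →ₗ[k] k) :
    IsComodHom k C ρ Coalgebra.comul (sliceLeft f ∘ₗ ρ) := by
  refine isComodHom_iff.2 fun φ v =>
    sub_eq_zero.1 ((Module.forall_dual_apply_eq_zero_iff k _).1 ?_)
  intro ψ
  have hconv (c : C) : ψ (dualAct Coalgebra.comul φ c) = (toConv ψ * toConv φ).ofConv c :=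
    apply_sliceRight ψ φ _
  rw [map_sub, sub_eq_zero, LinearMap.comp_apply, LinearMap.comp_apply, hconv, apply_sliceLeft,
    apply_sliceLeft, ← dualAct_apply, hρ.dualAct_mul, dualAct_apply]

lemma counit_sliceLeft {ρ : V →ₗ[k] V ⊗[k] C} (hρ : IsComod k C ρ) (f : V →ₗ[k] k) (v : V) :
    Coalgebra.counit (sliceLeft f (ρ v)) = f v := by
  rw [apply_sliceLeft, ← dualAct_apply, hρ.dualAct_counit]

lemma isSubcoalgebra_iff {D : Submodule k C} : IsSubcoalgebra k C D ↔ ∀ x ∈ D,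
    (∀ φ : C →ₗ[k] k, sliceRight φ (Coalgebra.comul x) ∈ D) ∧
      ∀ f : C →ₗ[k] k, sliceLeft f (Coalgebra.comul x) ∈ D :=
  forall₂_congr fun _ _ => mem_range_map_subtype_iff

lemma IsSubcoalgebra.isSubcomod {D : Submodule k C} (hD : IsSubcoalgebra k C D) :
    IsSubcomod k C Coalgebra.comul D :=
  isSubcomod_iff.2 fun φ x hx => (isSubcoalgebra_iff.1 hD x hx).1 φ

lemma IsSubcoalgebra.map_comul_congr {A B : Type*} [AddCommGroup A] [Module k A] [AddCommGroup B]
    [Module k B] {D : Submodule k C} (hD : IsSubcoalgebra k C D) {f f' : C →ₗ[k] A}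
    {h h' : C →ₗ[k] B} (hf : Set.EqOn f f' D) (hh : Set.EqOn h h' D) {x : C} (hx : x ∈ D) :
    TensorProduct.map f h (Coalgebra.comul x) = TensorProduct.map f' h' (Coalgebra.comul x) := by
  obtain ⟨s, hs⟩ := hD x hx
  have hf' : f ∘ₗ D.subtype = f' ∘ₗ D.subtype := LinearMap.ext fun y => hf y.2
  have hh' : h ∘ₗ D.subtype = h' ∘ₗ D.subtype := LinearMap.ext fun y => hh y.2
  simp only [← hs, ← LinearMap.comp_apply, ← TensorProduct.map_comp, hf', hh']

lemma map_smulRight_counit_comul {A B : Type*} [AddCommGroup A] [Module k A] [AddCommGroup B]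
    [Module k B] (a : A) (b : B) (x : C) :
    TensorProduct.map (Coalgebra.counit.smulRight a) (Coalgebra.counit.smulRight b)
      (Coalgebra.comul x) = Coalgebra.counit (R := k) x • a ⊗ₜ[k] b := by
  have h : TensorProduct.map (Coalgebra.counit.smulRight a) (Coalgebra.counit.smulRight b) =
      TensorProduct.map (Coalgebra.counit.smulRight a) (LinearMap.toSpanSingleton k B b) ∘ₗ
        (Coalgebra.counit (R := k) (A := C)).lTensor C :=
    TensorProduct.ext' fun x y => by simp
  rw [h, LinearMap.comp_apply, Coalgebra.lTensor_counit_comul]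
  simp [TensorProduct.smul_tmul']

lemma IsSubcoalgebra.dualAct_congr {D : Submodule k C} (hD : IsSubcoalgebra k C D)
    {φ ψ : C →ₗ[k] k} (h : Set.EqOn φ ψ D) {x : C} (hx : x ∈ D) :
    dualAct Coalgebra.comul φ x = dualAct Coalgebra.comul ψ x :=
  congrArg (TensorProduct.rid k C) (hD.map_comul_congr (Set.eqOn_refl LinearMap.id _) h hx)

lemma IsSubcoalgebra.convMul_apply_congr {A : Type*} [Ring A] [Algebra k A] {D : Submodule k C}
    (hD : IsSubcoalgebra k C D) {f f' h h' : C →ₗ[k] A} (hf : Set.EqOn f f' D)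
    (hh : Set.EqOn h h' D) {x : C} (hx : x ∈ D) :
    (toConv f * toConv h) x = (toConv f' * toConv h') x :=
  congrArg (LinearMap.mul' k A) (hD.map_comul_congr hf hh hx)

variable {Z : Type u} [AddCommGroup Z] [Module k Z] {γ : C →ₗ[k] Z} {g : Z}

lemma IsCentralMap.isSubcoalgebra_centralPart (hγ : IsCentralMap k C γ) :
    IsSubcoalgebra k C (centralPart γ Coalgebra.comul g) :=
  isSubcoalgebra_iff.2 fun x hx =>
    ⟨fun φ => isSubcomod_iff.1 (hγ.isSubcomod_centralPart isComod_comul) φ x hx,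
      fun f => (isComod_comul.isComodHom_sliceLeft f).mem_centralPart hx⟩

lemma apply_eq_counit_smul_of_mem_centralPart {x : C} (hx : x ∈ centralPart γ Coalgebra.comul g) :
    γ x = Coalgebra.counit (R := k) x • g := by
  rw [mem_centralPart, cores, LinearMap.comp_apply] at hx
  have h := congrArg (sliceLeft (Coalgebra.counit (R := k))) hx
  rwa [sliceLeft_lTensor, sliceLeft_tmul, sliceLeft, LinearMap.comp_apply,
    Coalgebra.rTensor_counit_comul, LinearEquiv.coe_coe, TensorProduct.lid_tmul, one_smul] at h

end Coefficients

section CentralGrading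

variable {k : Type u} [Field k] {C : Type u} [AddCommGroup C] [Module k C] [Coalgebra k C]
  {Z : Type u} [AddCommGroup Z] [Module k Z] [Coalgebra k Z]

lemma HasCentralChar.isGroupLikeElem {γ : C →ₗc[k] Z} {X : SimpleComodule k C} {g : Z}
    (hg : HasCentralChar k C γ.toLinearMap X g) : IsGroupLikeElem k g := by
  obtain ⟨v, hv⟩ := exists_ne (0 : X.V)
  exact (X.isComod.cores γ).isGroupLikeElem hv (hg v)

theorem iSup_centralPart_eq_top [IsAlgClosed k] (hC : IsCosemisimple k C) {γ : C →ₗc[k] Z}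
    (hγ : IsCentralMap k C γ.toLinearMap) {V : Type u} [AddCommGroup V] [Module k V]
    {ρ : V →ₗ[k] V ⊗[k] C} (hρ : IsComod k C ρ) :
    ⨆ g : GroupLike k Z, centralPart γ.toLinearMap ρ g.val = ⊤ := by
  set P := ⨆ g : GroupLike k Z, centralPart γ.toLinearMap ρ g.val
  by_contra hP
  have hquot : P.mkQ ≠ 0 := fun h => hP (by rw [← P.ker_mkQ, h, LinearMap.ker_zero])
  obtain ⟨X, j, -, hj, hne⟩ := hC.exists_simpleComodule_comp_ne_zero hρ hquot
  obtain ⟨g, hg⟩ := hγ.exists_hasCentralChar X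
  refine hne (LinearMap.ext fun v => (Submodule.Quotient.mk_eq_zero P).2 ?_)
  exact le_iSup (fun g : GroupLike k Z => centralPart γ.toLinearMap ρ g.val)
    ⟨g, hg.isGroupLikeElem⟩ (hj.mem_centralPart (hg v))

end CentralGrading

section Independence

variable {k : Type u} [Field k] {C : Type u} [AddCommGroup C] [Module k C] [Coalgebra k C]
  {D D₁ D₂ : Submodule k C}

lemma IsSubcoalgebra.inf (h₁ : IsSubcoalgebra k C D₁) (h₂ : IsSubcoalgebra k C D₂) :
    IsSubcoalgebra k C (D₁ ⊓ D₂) := by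
  rw [isSubcoalgebra_iff] at *
  exact fun x hx => ⟨fun φ => ⟨(h₁ x hx.1).1 φ, (h₂ x hx.2).1 φ⟩,
    fun f => ⟨(h₁ x hx.1).2 f, (h₂ x hx.2).2 f⟩⟩

lemma IsSubcoalgebra.sup (h₁ : IsSubcoalgebra k C D₁) (h₂ : IsSubcoalgebra k C D₂) :
    IsSubcoalgebra k C (D₁ ⊔ D₂) := by
  rw [isSubcoalgebra_iff] at *
  intro z hz
  obtain ⟨x, hx, y, hy, rfl⟩ := Submodule.mem_sup.1 hz
  simp only [map_add]
  exact ⟨fun φ => Submodule.add_mem_sup ((h₁ x hx).1 φ) ((h₂ y hy).1 φ),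
    fun f => Submodule.add_mem_sup ((h₁ x hx).2 f) ((h₂ y hy).2 f)⟩

lemma isSubcoalgebra_bot : IsSubcoalgebra k C ⊥ := by
  rintro x rfl
  simp

lemma IsSubcoalgebra.exists_counit_eq_one (hD : IsSubcoalgebra k C D) (hne : D ≠ ⊥) :
    ∃ x ∈ D, Coalgebra.counit (R := k) x = 1 := by
  obtain ⟨y, hy, hy0⟩ := D.exists_mem_ne_zero_of_ne_bot hne
  obtain ⟨φ, hφ⟩ := Module.Projective.exists_dual_eq_one k hy0
  refine ⟨sliceLeft φ (Coalgebra.comul y), (isSubcoalgebra_iff.1 hD y hy).2 φ, ?_⟩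
  rw [counit_sliceLeft isComod_comul, hφ]

lemma IsSubcoalgebra.disjoint_sup (hD : IsSubcoalgebra k C D) (h₁ : IsSubcoalgebra k C D₁)
    (h₂ : IsSubcoalgebra k C D₂) (hd₁ : Disjoint D D₁) (hd₂ : Disjoint D D₂) :
    Disjoint D (D₁ ⊔ D₂) := by
  obtain ⟨E, hDE, hE⟩ := hd₁.exists_isCompl
  obtain ⟨ψ, hψD, hψ₁⟩ : ∃ ψ : C →ₗ[k] k, Set.EqOn ψ Coalgebra.counit D ∧ Set.EqOn ψ 0 D₁ := by
    refine ⟨LinearMap.ofIsCompl hE (Coalgebra.counit ∘ₗ E.subtype) 0,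
      fun x hx => ?_, fun x hx => ?_⟩
    · exact LinearMap.ofIsCompl_apply_left hE (⟨x, hDE hx⟩ : E)
    · exact LinearMap.ofIsCompl_apply_right hE (⟨x, hx⟩ : D₁)
  refine Submodule.disjoint_def.2 fun z hz hz' => Submodule.disjoint_def.1 hd₂ z hz ?_
  obtain ⟨x, hx, y, hy, rfl⟩ := Submodule.mem_sup.1 hz'
  have hxy : dualAct Coalgebra.comul ψ (x + y) = x + y := by
    rw [hD.dualAct_congr hψD hz, isComod_comul.dualAct_counit]
  have hx0 : dualAct Coalgebra.comul ψ x = 0 := by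
    rw [h₁.dualAct_congr (ψ := 0) hψ₁ hx, map_zero, LinearMap.zero_apply]
  rw [← hxy, map_add, hx0, zero_add]
  exact isSubcomod_iff.1 h₂.isSubcomod ψ y hy

theorem iSupIndep_of_isSubcoalgebra {ι : Type*} {D : ι → Submodule k C}
    (hD : ∀ i, IsSubcoalgebra k C (D i)) (hd : Pairwise (Function.onFun Disjoint D)) :
    iSupIndep D := by
  classical
  refine iSupIndep_iff_supIndep.2 fun s => Finset.supIndep_iff_disjoint_erase.2 fun i _ => ?_
  have key : ∀ t : Finset ι, i ∉ t → IsSubcoalgebra k C (t.sup D) ∧ Disjoint (D i) (t.sup D) := by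
    intro t
    induction t using Finset.induction_on with
    | empty => exact fun _ => ⟨isSubcoalgebra_bot, disjoint_bot_right⟩
    | insert j t _ ih =>
      intro hi
      rw [Finset.mem_insert, not_or] at hi
      obtain ⟨ht, htd⟩ := ih hi.2
      rw [Finset.sup_insert]
      exact ⟨(hD j).sup ht, (hD i).disjoint_sup (hD j) ht (hd hi.1) htd⟩
  exact (key _ (Finset.notMem_erase i s)).2

end Independence

lemma exists_linearMap_eqOn_of_iSupIndep {k M N ι : Type*} [Ring k] [AddCommGroup M] [Module k M]
    [AddCommGroup N] [Module k N] {D : ι → Submodule k M} (hD : iSupIndep D) (htop : iSup D = ⊤)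
    (F : ι → M →ₗ[k] N) : ∃ f : M →ₗ[k] N, ∀ i, Set.EqOn f (F i) (D i) := by
  classical
  have hinternal := DirectSum.isInternal_submodule_of_iSupIndep_of_iSup_eq_top hD htop
  let e := LinearEquiv.ofBijective (DirectSum.coeLinearMap D) hinternal
  refine ⟨DirectSum.toModule k ι N (fun i => F i ∘ₗ (D i).subtype) ∘ₗ e.symm.toLinearMap,
    fun i x hx => ?_⟩
  have hx' : e.symm x = DirectSum.lof k ι (fun i => D i) i ⟨x, hx⟩ :=
    e.symm_apply_eq.2 (DirectSum.coeLinearMap_lof D i ⟨x, hx⟩).symm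
  rw [LinearMap.comp_apply, LinearEquiv.coe_coe, hx', DirectSum.toModule_lof]
  rfl

lemma linearMap_ext_of_iSup_eq_top {k M N ι : Type*} [Ring k] [AddCommGroup M] [Module k M]
    [AddCommGroup N] [Module k N] {D : ι → Submodule k M} (htop : iSup D = ⊤) {f g : M →ₗ[k] N}
    (h : ∀ i, ∀ x ∈ D i, f x = g x) : f = g :=
  LinearMap.eqLocus_eq_top.1 (top_le_iff.1 (htop ▸ iSup_le h))

section HopfPregrading

variable {k : Type u} [Field k] {B : Type u} [Ring B] [HopfAlgebra k B] {Γ : Type*} [Group Γ]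

/-- A family of nonzero subcoalgebras of a Hopf algebra, indexed by a group, compatible with the
unit, the product and the antipode, but not required to be independent: two of the subcoalgebras
may coincide. Images of Hopf algebra gradings under Hopf algebra maps are of this kind. -/
structure IsHopfPregrading (D : Γ → Submodule k B) : Prop where
  isSubcoalgebra (g : Γ) : IsSubcoalgebra k B (D g)
  ne_bot (g : Γ) : D g ≠ ⊥
  one_mem : 1 ∈ D 1
  mul_mem {g h : Γ} {x y : B} : x ∈ D g → y ∈ D h → x * y ∈ D (g * h)
  antipode_mem {g : Γ} {x : B} : x ∈ D g → HopfAlgebra.antipode k x ∈ D g⁻¹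

lemma IsSubcoalgebra.one_mem_of_mul_antipode_mem {D E : Submodule k B}
    (hD : IsSubcoalgebra k B D) (hne : D ≠ ⊥)
    (h : ∀ a ∈ D, ∀ b ∈ D, a * HopfAlgebra.antipode k b ∈ E) : 1 ∈ E := by
  obtain ⟨x, hx, hx1⟩ := hD.exists_counit_eq_one hne
  obtain ⟨s, hs⟩ := hD x hx
  have hmem (t : D ⊗[k] D) : LinearMap.mul' k B ((HopfAlgebra.antipode k).lTensor B
      (TensorProduct.map D.subtype D.subtype t)) ∈ E := by
    induction t with
    | zero => simp only [map_zero, zero_mem]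
    | add t t' ht ht' => simpa only [map_add] using add_mem ht ht'
    | tmul a b => exact h a a.2 b b.2
  have h1 := hmem s
  rwa [hs, HopfAlgebra.mul_antipode_lTensor_comul_apply, hx1, map_one] at h1

namespace IsHopfPregrading

variable {D : Γ → Submodule k B} (hD : IsHopfPregrading D)

/-- The indices of the subcoalgebras that contain the unit. Two subcoalgebras of the family are
equal or disjoint according to whether their indices agree modulo this normal subgroup. -/
def unitSupport : Subgroup Γ where
  carrier := {g | 1 ∈ D g}
  one_mem' := hD.one_mem
  mul_mem' {g h} hg hh := by simpa using hD.mul_mem hg hh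
  inv_mem' {g} hg := by simpa using hD.antipode_mem hg

lemma mem_unitSupport {g : Γ} : g ∈ hD.unitSupport ↔ 1 ∈ D g := Iff.rfl

instance : hD.unitSupport.Normal where
  conj_mem n hn g := (hD.isSubcoalgebra g).one_mem_of_mul_antipode_mem (hD.ne_bot g)
    fun a ha b hb => by simpa using hD.mul_mem (hD.mul_mem ha hn) (hD.antipode_mem hb)

lemma le_of_inv_mul_mem_unitSupport {g h : Γ} (hgh : g⁻¹ * h ∈ hD.unitSupport) : D g ≤ D h :=
  fun x hx => by simpa using hD.mul_mem hx hgh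

lemma eq_of_inv_mul_mem_unitSupport {g h : Γ} (hgh : g⁻¹ * h ∈ hD.unitSupport) : D g = D h :=
  (hD.le_of_inv_mul_mem_unitSupport hgh).antisymm <| hD.le_of_inv_mul_mem_unitSupport <| by
    simpa using inv_mem hgh

lemma disjoint_of_inv_mul_notMem_unitSupport {g h : Γ} (hgh : g⁻¹ * h ∉ hD.unitSupport) :
    Disjoint (D g) (D h) := by
  refine disjoint_iff.2 (of_not_not fun hne => hgh ?_)
  have hmem : h * g⁻¹ ∈ hD.unitSupport :=
    ((hD.isSubcoalgebra g).inf (hD.isSubcoalgebra h)).one_mem_of_mul_antipode_mem hne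
      fun a ha b hb => hD.mul_mem ha.2 (hD.antipode_mem hb.1)
  exact Subgroup.Normal.mem_comm inferInstance hmem

lemma exists_linearMap_eq_counit_smul (htop : iSup D = ⊤) {M : Type*} [AddCommGroup M] [Module k M]
    (m : Γ ⧸ hD.unitSupport → M) :
    ∃ f : B →ₗ[k] M, ∀ g, ∀ x ∈ D g, f x = Coalgebra.counit (R := k) x • m g := by
  have hout (g : Γ) : D g = D (QuotientGroup.mk (s := hD.unitSupport) g).out :=
    hD.eq_of_inv_mul_mem_unitSupport (QuotientGroup.eq.1 (QuotientGroup.out_eq' _).symm)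
  have hind : iSupIndep fun q : Γ ⧸ hD.unitSupport => D q.out := by
    refine iSupIndep_of_isSubcoalgebra (fun q => hD.isSubcoalgebra _) fun p q hpq => ?_
    refine hD.disjoint_of_inv_mul_notMem_unitSupport fun h => hpq ?_
    simpa using QuotientGroup.eq.2 h
  have htop' : ⨆ q : Γ ⧸ hD.unitSupport, D q.out = ⊤ :=
    top_le_iff.1 (htop ▸ iSup_le fun g => (hout g).trans_le (le_iSup_of_le _ le_rfl))
  obtain ⟨f, hf⟩ := exists_linearMap_eqOn_of_iSupIndep hind htop' fun q =>
    (Coalgebra.counit (R := k) (A := B)).smulRight (m q)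
  exact ⟨f, fun g x hx => hf g (hout g ▸ hx)⟩

theorem exists_bialgHom_monoidAlgebra (htop : iSup D = ⊤) {P : Type u} [Group P] (χ : Γ →* P)
    (hχ : hD.unitSupport ≤ χ.ker) : ∃ θ : B →ₐc[k] MonoidAlgebra k P, ∀ g, ∀ x ∈ D g,
      θ x = Coalgebra.counit (R := k) x • MonoidAlgebra.of k P (χ g) := by
  obtain ⟨f, hf⟩ := hD.exists_linearMap_eq_counit_smul htop fun q =>
    MonoidAlgebra.of k P (QuotientGroup.lift _ χ hχ q)
  simp only [QuotientGroup.lift_mk] at hf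
  have hone : f 1 = 1 := by simp [hf 1 1 hD.one_mem, MonoidAlgebra.one_def]
  have hmul : (LinearMap.mul k B).compr₂ f = (LinearMap.mul k _).compl₁₂ f f := by
    refine linearMap_ext_of_iSup_eq_top htop fun g x hx =>
      linearMap_ext_of_iSup_eq_top htop fun h y hy => ?_
    simp [hf _ _ hx, hf _ _ hy, hf _ _ (hD.mul_mem hx hy), mul_comm]
  have hcounit : Coalgebra.counit ∘ₗ f = Coalgebra.counit :=
    linearMap_ext_of_iSup_eq_top htop fun g x hx => by simp [hf g x hx]
  have hcomul : TensorProduct.map f f ∘ₗ Coalgebra.comul = Coalgebra.comul ∘ₗ f := by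
    refine linearMap_ext_of_iSup_eq_top htop fun g x hx => ?_
    have hfg : Set.EqOn f (Coalgebra.counit.smulRight (MonoidAlgebra.of k P (χ g))) (D g) := hf g
    rw [LinearMap.comp_apply, LinearMap.comp_apply,
      (hD.isSubcoalgebra g).map_comul_congr hfg hfg hx, map_smulRight_counit_comul, hf g x hx,
      map_smul, (MonoidAlgebra.isGroupLikeElem_of _).comul_eq_tmul_self]
  let θ := AlgHom.ofLinearMap f hone (LinearMap.congr_fun₂ hmul)
  exact ⟨BialgHom.ofAlgHom θ (AlgHom.toLinearMap_injective hcounit)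
    (AlgHom.toLinearMap_injective hcomul), hf⟩

end IsHopfPregrading

end HopfPregrading

section BialgHom

variable {k G A B : Type*} [Field k] [Ring G] [HopfAlgebra k G] [Ring A] [Algebra k A] [Ring B]
  [HopfAlgebra k B]

lemma comp_antipode_convMul_self (f : G →ₐ[k] A) :
    toConv (f.toLinearMap ∘ₗ HopfAlgebra.antipode k) * toConv f.toLinearMap = 1 := by
  have h := LinearMap.algHom_comp_convMul_distrib f
    (toConv (HopfAlgebra.antipode k (A := G))) (toConv LinearMap.id)
  rw [LinearMap.antipode_mul_id] at h
  refine WithConv.ext (h.symm.trans (LinearMap.ext fun x => ?_))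
  simp [LinearMap.convOne_def]

lemma self_convMul_antipode_comp (f : G →ₗc[k] B) :
    toConv f.toLinearMap * toConv (HopfAlgebra.antipode k ∘ₗ f.toLinearMap) = 1 := by
  have h := LinearMap.convMul_comp_coalgHom_distrib (toConv LinearMap.id)
    (toConv (HopfAlgebra.antipode k (A := B))) f
  rw [LinearMap.id_mul_antipode] at h
  exact WithConv.ext (h.symm.trans (LinearMap.convOne_comp_coalgHom f))

lemma bialgHom_antipode_apply (f : G →ₐc[k] B) (x : G) :
    f (HopfAlgebra.antipode k x) = HopfAlgebra.antipode k (f x) :=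
  LinearMap.congr_fun (congrArg ofConv <| left_inv_eq_right_inv
    (comp_antipode_convMul_self (f : G →ₐ[k] B)) (self_convMul_antipode_comp (f : G →ₗc[k] B))) x

end BialgHom

section Map

variable {k : Type u} [Field k] {A B : Type u}

lemma IsSubcoalgebra.map [AddCommGroup A] [Module k A] [Coalgebra k A] [AddCommGroup B] [Module k B]
    [Coalgebra k B] {D : Submodule k A} (hD : IsSubcoalgebra k A D) (f : A →ₗc[k] B) :
    IsSubcoalgebra k B (D.map f.toLinearMap) := by
  rintro _ ⟨x, hx, rfl⟩
  obtain ⟨s, hs⟩ := hD x hx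
  let f' := f.toLinearMap.submoduleMap D
  refine ⟨TensorProduct.map f' f' s, ?_⟩
  rw [← LinearMap.comp_apply Coalgebra.comul, ← f.map_comp_comul, LinearMap.comp_apply, ← hs,
    ← LinearMap.comp_apply, ← LinearMap.comp_apply, ← TensorProduct.map_comp,
    ← TensorProduct.map_comp]
  rfl

lemma IsHopfPregrading.map [Ring A] [HopfAlgebra k A] [Ring B] [HopfAlgebra k B] {Γ : Type*}
    [Group Γ] {D : Γ → Submodule k A} (hD : IsHopfPregrading D) (f : A →ₐc[k] B) :
    IsHopfPregrading fun g => (D g).map (f : A →ₗ[k] B) where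
  isSubcoalgebra g := (hD.isSubcoalgebra g).map (f : A →ₗc[k] B)
  ne_bot g h := by
    obtain ⟨x, hx, hx1⟩ := (hD.isSubcoalgebra g).exists_counit_eq_one (hD.ne_bot g)
    have hfx : f x = 0 := (Submodule.eq_bot_iff _).1 h _ (Submodule.mem_map_of_mem hx)
    rw [← CoalgHomClass.counit_comp_apply f, hfx, map_zero] at hx1
    exact zero_ne_one hx1
  one_mem := ⟨1, hD.one_mem, map_one f⟩
  mul_mem := by
    rintro g h _ _ ⟨x, hx, rfl⟩ ⟨y, hy, rfl⟩
    exact ⟨x * y, hD.mul_mem hx hy, map_mul f x y⟩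
  antipode_mem := by
    rintro g _ ⟨x, hx, rfl⟩
    exact ⟨_, hD.antipode_mem hx, bialgHom_antipode_apply f x⟩

end Map

section CentralPregrading

variable {k : Type u} [Field k] {G Z : Type u} [Ring G] [HopfAlgebra k G] [Ring Z] [HopfAlgebra k Z]
  {ζ : G →ₐc[k] Z}

/-- The regular coaction of `G` corestricted along `ζ`, as an algebra homomorphism; because
of its multiplicativity central characters multiply along products in `G`. -/
noncomputable def coresComulAlgHom (ζ : G →ₐc[k] Z) : G →ₐ[k] G ⊗[k] Z :=
  (Algebra.TensorProduct.map (AlgHom.id k G) (ζ : G →ₐ[k] Z)).comp (Bialgebra.comulAlgHom k G)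

lemma mem_centralPart_comul_iff {g : Z} {x : G} :
    x ∈ centralPart (ζ : G →ₗ[k] Z) Coalgebra.comul g ↔ coresComulAlgHom ζ x = x ⊗ₜ[k] g :=
  Iff.rfl

lemma mul_mem_centralPart {g h : Z} {x y : G}
    (hx : x ∈ centralPart (ζ : G →ₗ[k] Z) Coalgebra.comul g)
    (hy : y ∈ centralPart (ζ : G →ₗ[k] Z) Coalgebra.comul h) :
    x * y ∈ centralPart (ζ : G →ₗ[k] Z) Coalgebra.comul (g * h) := by
  rw [mem_centralPart_comul_iff] at *
  rw [map_mul, hx, hy, Algebra.TensorProduct.tmul_mul_tmul]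

lemma IsCentralMap.antipode_mem_centralPart (hζ : IsCentralMap k G (ζ : G →ₗ[k] Z)) {g : Z}
    (hg : IsGroupLikeElem k g) {x : G} (hx : x ∈ centralPart (ζ : G →ₗ[k] Z) Coalgebra.comul g) :
    HopfAlgebra.antipode k x ∈
      centralPart (ζ : G →ₗ[k] Z) Coalgebra.comul (HopfAlgebra.antipode k g) := by
  set D := centralPart (ζ : G →ₗ[k] Z) Coalgebra.comul g
  have hD : IsSubcoalgebra k G D := hζ.isSubcoalgebra_centralPart
  set L := (coresComulAlgHom ζ).toLinearMap
  set ι : G →ₗ[k] G ⊗[k] Z := (TensorProduct.mk k G Z).flip g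
  set c : G →ₗ[k] G ⊗[k] Z :=
    (TensorProduct.mk k G Z).flip (HopfAlgebra.antipode k g) ∘ₗ HopfAlgebra.antipode k
  have hL : Set.EqOn L ι D := fun y hy => mem_centralPart_comul_iff.1 hy
  have hinv : toConv ι * toConv c = 1 := by
    ext y
    have h : LinearMap.mul' k (G ⊗[k] Z) ∘ₗ TensorProduct.map ι c =
        (TensorProduct.mk k G Z).flip 1 ∘ₗ
          LinearMap.mul' k G ∘ₗ (HopfAlgebra.antipode k).lTensor G :=
      TensorProduct.ext' fun a b => by simp [ι, c, hg.mul_antipode_cancel]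
    have hy := LinearMap.congr_fun h (Coalgebra.comul y)
    rw [LinearMap.comp_apply, LinearMap.comp_apply, LinearMap.comp_apply,
      HopfAlgebra.mul_antipode_lTensor_comul_apply] at hy
    exact hy
  have hLc : Set.EqOn (toConv L * toConv c).ofConv (1 : WithConv (G →ₗ[k] G ⊗[k] Z)).ofConv D :=
    fun y hy => (hD.convMul_apply_congr hL (Set.eqOn_refl c _) hy).trans
      (LinearMap.congr_fun (congrArg ofConv hinv) y)
  rw [mem_centralPart_comul_iff]
  calc
    L (HopfAlgebra.antipode k x) =
        (toConv (L ∘ₗ HopfAlgebra.antipode k) * 1) x := by rw [mul_one]; rfl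
    _ = (toConv (L ∘ₗ HopfAlgebra.antipode k) * (toConv L * toConv c)) x :=
      (hD.convMul_apply_congr (Set.eqOn_refl _ _) hLc hx).symm
    _ = c x := by rw [← mul_assoc, comp_antipode_convMul_self, one_mul]

lemma IsCentralMap.centralPart_ne_bot [IsAlgClosed k] (hG : IsCosemisimple k G)
    (hζ : IsCentralMap k G (ζ : G →ₗ[k] Z)) (hsurj : Function.Surjective ζ) (g : GroupLike k Z) :
    centralPart (ζ : G →ₗ[k] Z) Coalgebra.comul g.val ≠ ⊥ := by
  intro hbot
  have htop : ⨆ h : GroupLike k Z, centralPart (ζ : G →ₗ[k] Z) Coalgebra.comul h.val = ⊤ :=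
    iSup_centralPart_eq_top (γ := (ζ : G →ₗc[k] Z)) hG hζ isComod_comul
  have hspan : (⊤ : Submodule k G) ≤ (Submodule.span k (GroupLike.val '' {g}ᶜ)).comap
      (ζ : G →ₗ[k] Z) := by
    refine htop ▸ iSup_le fun h x hx => ?_
    rw [Submodule.mem_comap, apply_eq_counit_smul_of_mem_centralPart hx]
    rcases eq_or_ne h g with rfl | hne
    · rw [(Submodule.eq_bot_iff _).1 hbot x hx, map_zero, zero_smul]
      exact zero_mem _
    · exact Submodule.smul_mem _ _ (Submodule.subset_span ⟨h, hne, rfl⟩)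
  obtain ⟨y, hy⟩ := hsurj g.val
  have hmem : g.val ∈ Submodule.span k (GroupLike.val '' {g}ᶜ) :=
    hy ▸ hspan (Submodule.mem_top (x := y))
  exact linearIndependent_iff_notMem_span.1 linearIndep_groupLikeVal g
    (by rwa [Set.compl_eq_univ_sdiff] at hmem)

theorem IsCentralMap.isHopfPregrading_centralPart [IsAlgClosed k] (hG : IsCosemisimple k G)
    (hζ : IsCentralMap k G (ζ : G →ₗ[k] Z)) (hsurj : Function.Surjective ζ) :
    IsHopfPregrading fun g : GroupLike k Z =>
      centralPart (ζ : G →ₗ[k] Z) Coalgebra.comul g.val where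
  isSubcoalgebra _ := hζ.isSubcoalgebra_centralPart
  ne_bot := hζ.centralPart_ne_bot hG hsurj
  one_mem := mem_centralPart_comul_iff.2 (map_one _)
  mul_mem := mul_mem_centralPart
  antipode_mem {g} _ hx := hζ.antipode_mem_centralPart g.isGroupLikeElem_val hx

end CentralPregrading

section CentralCharacter

variable {k : Type u} [Field k] {C D Z : Type u} [AddCommGroup C] [Module k C] [Coalgebra k C]
  [AddCommGroup D] [Module k D] [Coalgebra k D] [AddCommGroup Z] [Module k Z]

lemma IsCentralMap.exists_simpleComodule_comp_ne_zero {γ : C →ₗ[k] Z}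
    (hγ : IsCentralMap k C γ) (hC : IsCosemisimple k C) {g : Z} {W : Type*} [AddCommGroup W]
    [Module k W] {T : C →ₗ[k] W} (hT : ∃ a ∈ centralPart γ Coalgebra.comul g, T a ≠ 0) :
    ∃ X : SimpleComodule k C, HasCentralChar k C γ X g ∧
      ∃ j : X.V →ₗ[k] C, IsComodHom k C X.ρ Coalgebra.comul j ∧ T ∘ₗ j ≠ 0 := by
  obtain ⟨a, ha, hTa⟩ := hT
  set A := centralPart γ Coalgebra.comul g
  obtain ⟨ρA, hρA⟩ := (hγ.isSubcomod_centralPart isComod_comul : IsSubcomod k C _ A).exists_restrict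
  have hTA : T ∘ₗ A.subtype ≠ 0 := fun h => hTa (LinearMap.congr_fun h ⟨a, ha⟩)
  obtain ⟨X, j, hinj, hj, hTj⟩ := hC.exists_simpleComodule_comp_ne_zero
    (.of_injective hρA A.subtype_injective isComod_comul) hTA
  have hjA : IsComodHom k C X.ρ Coalgebra.comul (A.subtype ∘ₗ j) := hρA.comp hj
  exact ⟨X, fun v => hjA.mem_centralPart_of_injective (A.subtype_injective.comp hinj) (j v).2,
    _, hjA, hTj⟩

lemma HasCentralChar.comp {γ : C →ₗ[k] Z} {X : SimpleComodule k C} {g : Z}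
    (hg : HasCentralChar k C γ X g) {Y : Type u} [AddCommGroup Y] [Module k Y] (α : Z →ₗ[k] Y) :
    HasCentralChar k C (α ∘ₗ γ) X (α g) := fun v => by
  rw [cores, LinearMap.lTensor_comp, LinearMap.comp_assoc]
  exact congrArg (α.lTensor X.V) (hg v)

lemma HasCentralChar.unique {γ : C →ₗ[k] Z} {X : SimpleComodule k C} {g g' : Z}
    (hg : HasCentralChar k C γ X g) (hg' : HasCentralChar k C γ X g') : g' = g := by
  obtain ⟨v, hv⟩ := exists_ne (0 : X.V)
  obtain ⟨ξ, hξ⟩ := Module.Projective.exists_dual_eq_one k hv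
  simpa [hξ] using congrArg (sliceLeft ξ) ((hg' v).symm.trans (hg v))

theorem HasCentralChar.exists_isComodHom_of_map_centralPart_le {γ : C →ₗ[k] Z}
    (hγ : IsCentralMap k C γ) (hC : IsCosemisimple k C) (hD : IsCosemisimple k D) (π : C →ₗc[k] D)
    {X : SimpleComodule k C} {g g' : Z} (hX : HasCentralChar k C γ X g)
    (hle : (centralPart γ Coalgebra.comul g).map π.toLinearMap ≤
      (centralPart γ Coalgebra.comul g').map π.toLinearMap) :
    ∃ X₁ : SimpleComodule k C, HasCentralChar k C γ X₁ g' ∧ ∃ f : X₁.V →ₗ[k] X.V, f ≠ 0 ∧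
      IsComodHom k D (cores k C π.toLinearMap X₁.ρ) (cores k C π.toLinearMap X.ρ) f := by
  obtain ⟨v, hv⟩ := exists_ne (0 : X.V)
  obtain ⟨ξ, hξ⟩ := Module.Projective.exists_dual_eq_one k hv
  have hcoeff := X.isComod.isComodHom_sliceLeft ξ
  set F := π.toLinearMap ∘ₗ sliceLeft ξ ∘ₗ X.ρ
  have hF : IsComodHom k D (cores k C π.toLinearMap X.ρ) Coalgebra.comul F :=
    (isComodHom_coalgHom π).comp (hcoeff.cores _)
  have hFv : F v ≠ 0 := fun h => one_ne_zero (α := k) <| by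
    rw [← hξ, ← counit_sliceLeft X.isComod ξ v, ← CoalgHomClass.counit_comp_apply π]
    exact (congrArg _ h).trans (map_zero _)
  obtain ⟨q, hq, hFqF⟩ := hD.exists_comp_comp_self (X.isComod.cores π) isComod_comul hF
  obtain ⟨a, ha, haF⟩ := hle (Submodule.mem_map_of_mem (hcoeff.mem_centralPart (hX v)))
  have hqa : (q ∘ₗ π.toLinearMap) a ≠ 0 := fun h => hFv <| by
    rw [← LinearMap.congr_fun hFqF v]
    exact (congrArg F ((congrArg q haF.symm).trans h)).trans (map_zero F)
  obtain ⟨X₁, hX₁, j, hj, hne⟩ :=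
    hγ.exists_simpleComodule_comp_ne_zero hC ⟨a, ha, hqa⟩
  exact ⟨X₁, hX₁, _, hne, (hq.comp (isComodHom_coalgHom π)).comp (hj.cores _)⟩

end CentralCharacter

section Restriction

variable {k : Type u} [Field k] {G B : Type u} [Ring G] [HopfAlgebra k G] [Ring B] [HopfAlgebra k B]
  {Γ : Type*} [Group Γ] {D : Γ → Submodule k G}

lemma IsHopfPregrading.exists_bialgHom_monoidAlgebra_of_surjective (hD : IsHopfPregrading D)
    (htop : iSup D = ⊤) {f : G →ₐc[k] B} (hf : Function.Surjective f) {P : Type u} [Group P]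
    (χ : Γ →* P) (hχ : (hD.map f).unitSupport ≤ χ.ker) :
    ∃ θ : B →ₐc[k] MonoidAlgebra k P, ∀ g, ∀ x ∈ D g,
      θ (f x) = Coalgebra.counit (R := k) x • MonoidAlgebra.of k P (χ g) := by
  have htop' : ⨆ g, (D g).map (f : G →ₗ[k] B) = ⊤ := by
    rw [← Submodule.map_iSup, htop, Submodule.map_top, LinearMap.range_eq_top]
    exact hf
  obtain ⟨θ, hθ⟩ := (hD.map f).exists_bialgHom_monoidAlgebra htop' χ hχ
  refine ⟨θ, fun g x hx => (hθ g _ (Submodule.mem_map_of_mem hx)).trans ?_⟩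
  exact congrArg (· • _) (CoalgHomClass.counit_comp_apply f x)

variable {Z : Type u} [Ring Z] [HopfAlgebra k Z] {ζ : G →ₐc[k] Z}

lemma IsHopfPregrading.mem_unitSupport_of_pushout {Γ : Type u} [Group Γ] {D : Γ → Submodule k G}
    (hD : IsHopfPregrading D) (htop : iSup D = ⊤)
    {π : G →ₐc[k] B} (hπ : Function.Surjective π) (hζ : Function.Surjective ζ)
    (hle : (hD.map ζ).unitSupport ≤ (hD.map π).unitSupport) {P : Type u} [Ring P] [Bialgebra k P]
    {α : Z →ₐc[k] P}
    (hα : ∀ (W : Type u) [Ring W] [HopfAlgebra k W] (α' : Z →ₐc[k] W) (β' : B →ₐc[k] W),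
      α'.comp ζ = β'.comp π → ∃ t : P →ₐc[k] W, t.comp α = α')
    {g : Γ} {x : G} (hx : x ∈ D g) (hx1 : Coalgebra.counit (R := k) x = 1) (hαx : α (ζ x) = 1) :
    g ∈ (hD.map π).unitSupport := by
  let χ := QuotientGroup.mk' (hD.map π).unitSupport
  have hker : χ.ker = (hD.map π).unitSupport := QuotientGroup.ker_mk' _
  obtain ⟨β', hβ'⟩ := hD.exists_bialgHom_monoidAlgebra_of_surjective htop hπ χ hker.ge
  obtain ⟨α', hα'⟩ := hD.exists_bialgHom_monoidAlgebra_of_surjective htop hζ χ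
    (hle.trans hker.ge)
  have hcomm : α'.comp ζ = β'.comp π := BialgHom.coe_linearMap_injective <|
    linearMap_ext_of_iSup_eq_top htop fun h y hy => (hα' h y hy).trans (hβ' h y hy).symm
  obtain ⟨t, rfl⟩ := hα _ α' β' hcomm
  have hχg : MonoidAlgebra.of k _ (χ g) = 1 := by
    rw [← one_smul k (MonoidAlgebra.of k _ (χ g)), ← hx1, ← hα' g x hx, BialgHom.comp_apply, hαx,
      map_one]
  exact (QuotientGroup.eq_one_iff g).1 (MonoidAlgebra.of_injective (hχg.trans (map_one _).symm))

lemma unitSupport_map_centralPart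
    (hA : IsHopfPregrading fun g : GroupLike k Z =>
      centralPart (ζ : G →ₗ[k] Z) Coalgebra.comul g.val) :
    (hA.map ζ).unitSupport = ⊥ := by
  refine (Subgroup.eq_bot_iff_forall _).2 fun g hg => ?_
  obtain ⟨x, hx, hx1⟩ := (hA.map ζ).mem_unitSupport.1 hg
  rw [apply_eq_counit_smul_of_mem_centralPart hx] at hx1
  have hcounit : Coalgebra.counit (R := k) x = 1 := by
    simpa [g.isGroupLikeElem_val.counit_eq_one] using congrArg (Coalgebra.counit (R := k)) hx1
  exact GroupLike.val_injective (by simpa [hcounit] using hx1)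

theorem IsCentralMap.map_centralPart_eq_of_pushout [IsAlgClosed k] (hG : IsCosemisimple k G)
    (hζ : IsCentralMap k G (ζ : G →ₗ[k] Z)) (hζsurj : Function.Surjective ζ) {π : G →ₐc[k] B}
    (hπsurj : Function.Surjective π) {P : Type u} [Ring P] [Bialgebra k P] {α : Z →ₐc[k] P}
    (hα : ∀ (W : Type u) [Ring W] [HopfAlgebra k W] (α' : Z →ₐc[k] W) (β' : B →ₐc[k] W),
      α'.comp ζ = β'.comp π → ∃ t : P →ₐc[k] W, t.comp α = α')
    {g : GroupLike k Z} (hg : α g.val = 1) :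
    (centralPart (ζ : G →ₗ[k] Z) Coalgebra.comul g.val).map (π : G →ₗ[k] B) =
      (centralPart (ζ : G →ₗ[k] Z) Coalgebra.comul 1).map (π : G →ₗ[k] B) := by
  have hA := hζ.isHopfPregrading_centralPart hG hζsurj
  have htop : ⨆ h : GroupLike k Z, centralPart (ζ : G →ₗ[k] Z) Coalgebra.comul h.val = ⊤ :=
    iSup_centralPart_eq_top (γ := (ζ : G →ₗc[k] Z)) hG hζ isComod_comul
  obtain ⟨x, hx, hx1⟩ := (hA.isSubcoalgebra g).exists_counit_eq_one (hA.ne_bot g)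
  have hζx : ζ x = g.val := (apply_eq_counit_smul_of_mem_centralPart hx).trans <| by
    rw [hx1, one_smul]
  have hle : (hA.map ζ).unitSupport ≤ (hA.map π).unitSupport :=
    (unitSupport_map_centralPart hA).trans_le bot_le
  have hgN : g ∈ (hA.map π).unitSupport :=
    hA.mem_unitSupport_of_pushout htop hπsurj hζsurj hle hα hx hx1 (hζx ▸ hg)
  refine ((hA.map π).eq_of_inv_mul_mem_unitSupport (g := 1) (h := g) ?_).symm
  rwa [inv_one, one_mul]

end Restriction

end QG

open QG in
theorem statement_16_general {k : Type u} [Field k] [IsAlgClosed k] {G B : Type u} [Ring G]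
    [HopfAlgebra k G] [Ring B] [HopfAlgebra k B] {π : G →ₐc[k] B} (hπsurj : Function.Surjective π)
    (hG : IsCosemisimple k G) (hB : IsCosemisimple k B) {Z : Type u} [Ring Z] [HopfAlgebra k Z]
    {ζ : G →ₐc[k] Z} (hζsurj : Function.Surjective ζ) (hζ : IsCentralMap k G (ζ : G →ₗ[k] Z))
    {P : Type u} [Ring P] [Bialgebra k P] {α : Z →ₐc[k] P}
    (hα : ∀ (W : Type u) [Ring W] [HopfAlgebra k W] (α' : Z →ₐc[k] W) (β' : B →ₐc[k] W),
      α'.comp ζ = β'.comp π → ∃ t : P →ₐc[k] W, t.comp α = α')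
    (X : SimpleComodule k G)
    (hX : HasCentralChar k G ((α.comp ζ : G →ₐc[k] P) : G →ₗ[k] P) X 1) :
    ∃ X₁ : SimpleComodule k G, HasCentralChar k G (ζ : G →ₗ[k] Z) X₁ 1 ∧
      ∃ f : X₁.V →ₗ[k] X.V, f ≠ 0 ∧
        IsComodHom k B (cores k G (π : G →ₗ[k] B) X₁.ρ) (cores k G (π : G →ₗ[k] B) X.ρ) f := by
  obtain ⟨g, hg⟩ := hζ.exists_hasCentralChar X
  have hggl : IsGroupLikeElem k g := HasCentralChar.isGroupLikeElem (γ := (ζ : G →ₗc[k] Z)) hg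
  have hαg : α g = 1 := hX.unique (hg.comp (α : Z →ₗ[k] P))
  have hmap := hζ.map_centralPart_eq_of_pushout hG hζsurj hπsurj hα (g := ⟨g, hggl⟩) hαg
  exact hg.exists_isComodHom_of_map_centralPart_le hζ hG hB (π : G →ₗc[k] B) hmap.le

open QG in
/-- Let `H ≤ G` be an embedding of linearly reductive
quantum groups and `V ∈ Ĝ` a simple comodule whose restriction to the
relative center `Z(G,H) = Z(G) ∩ H` is a sum of copies of the trivial
character.  Then there is a simple `V₁ ∈ Ĝ` with trivial central character
(trivial restriction to `Z(G)`) which is not disjoint from `V` over `H`. -/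
theorem statement_16 (k : Type u) [Field k] [IsAlgClosed k]
    (G Hh : Type u) [Ring G] [HopfAlgebra k G] [Ring Hh] [HopfAlgebra k Hh]
    (π : G →ₐc[k] Hh) (hsurj : Function.Surjective π)
    (hcssG : IsCosemisimple k G) (hcssH : IsCosemisimple k Hh)
    (Z : Type u) [Ring Z] [HopfAlgebra k Z]
    (ζ : G →ₐc[k] Z) (hζsurj : Function.Surjective ζ)
    (hζcentral : IsCentralMap k G (ζ : G →ₗ[k] Z))
    (hζlargest : ∀ (Z' : Type u) [Ring Z'] [HopfAlgebra k Z'] (ζ' : G →ₐc[k] Z'),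
      Function.Surjective ζ' → IsCentralMap k G (ζ' : G →ₗ[k] Z') →
      ∃ t : Z →ₐc[k] Z', t.comp ζ = ζ')
    (ZH : Type u) [Ring ZH] [HopfAlgebra k ZH]
    (α : Z →ₐc[k] ZH) (β : Hh →ₐc[k] ZH)
    (hαsurj : Function.Surjective α) (hβsurj : Function.Surjective β)
    (hcomm : α.comp ζ = β.comp π)
    (hpushout : ∀ (W : Type u) [Ring W] [HopfAlgebra k W]
      (α' : Z →ₐc[k] W) (β' : Hh →ₐc[k] W), α'.comp ζ = β'.comp π →
      ∃! t : ZH →ₐc[k] W, t.comp α = α' ∧ t.comp β = β')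
    (X : SimpleComodule k G)
    (htriv : HasCentralChar k G ((α.comp ζ : G →ₐc[k] ZH) : G →ₗ[k] ZH) X 1) :
    ∃ X₁ : SimpleComodule k G,
      HasCentralChar k G (ζ : G →ₗ[k] Z) X₁ 1 ∧
      ∃ f : X₁.V →ₗ[k] X.V, f ≠ 0 ∧
        IsComodHom k Hh (cores k G (π : G →ₗ[k] Hh) X₁.ρ)
          (cores k G (π : G →ₗ[k] Hh) X.ρ) f :=
  statement_16_general hsurj hcssG hcssH hζsurj hζcentral
    (fun W _ _ α' β' h => let ⟨t, ht, _⟩ := hpushout W α' β' h; ⟨t, ht.1⟩) X htriv
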